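/- arXiv:2604.12811 — 4 statements merged into one kernel-verified Lean document; each statement's English description precedes it below -/
import Mathlib

section
/- Let x' be obtained from x by a best-response update at coordinate i: x'_j = x_j for j ≠ i, and x'_i = sign(φ_i(x_{−i})) if φ_i(x_{−i}) ≠ 0 while x'_i = x_i if φ_i(x_{−i}) = 0. Then F(x') − F(x) = 2·|φ_i(x_{−i})| whenever x'_i ≠ x_i, and F(x') = F(x) whenever x'_i = x_i. In particular, every best-response update weakly increases F, strictly so whenever the updated coordinate flips. -/
/-! The update changes only coordinate `i`, so both `x` and `x'` are of the form
`Function.update x i (±1)`. A flip is possible only when `φ_i ≠ 0`; it then moves from the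
vertex with `x_i = -sign φ_i` to the one with `x_i = sign φ_i`, and by definition of `φ_i` the
potentials of these two differ by `2 φ_i sign φ_i = 2 |φ_i|`. -/

open Finset

/-- Potential of the dense associative memory. -/
noncomputable def damF (N p n : ℕ) (ξ : Fin p → Fin N → ℝ) (x : Fin N → ℝ) : ℝ :=
  (1 / (N : ℝ) ^ (n - 1)) * ∑ μ : Fin p, (∑ i : Fin N, ξ μ i * x i) ^ n

/-- Marginal potential at coordinate `i`. -/
noncomputable def damPhi (N p n : ℕ) (ξ : Fin p → Fin N → ℝ) (i : Fin N)
    (x : Fin N → ℝ) : ℝ :=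
  (1 / 2) * (damF N p n ξ (Function.update x i 1) - damF N p n ξ (Function.update x i (-1)))

/-- A best-response update at coordinate `i` increases `F` by exactly `2|φ_i|` when the
coordinate flips, leaves `F` unchanged otherwise, and in particular weakly increases `F`. -/
theorem stmt3 (N p n : ℕ) (hN : 1 ≤ N) (hp : 1 ≤ p) (hn : 2 ≤ n)
    (ξ : Fin p → Fin N → ℝ) (hξ : ∀ μ i, ξ μ i = 1 ∨ ξ μ i = -1)
    (x : Fin N → ℝ) (hx : ∀ i, x i = 1 ∨ x i = -1)
    (i : Fin N) (x' : Fin N → ℝ)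
    (hoff : ∀ j, j ≠ i → x' j = x j)
    (hbr : damPhi N p n ξ i x ≠ 0 → x' i = Real.sign (damPhi N p n ξ i x))
    (hstay : damPhi N p n ξ i x = 0 → x' i = x i) :
    (x' i ≠ x i → damF N p n ξ x' - damF N p n ξ x = 2 * |damPhi N p n ξ i x|) ∧
    (x' i = x i → damF N p n ξ x' = damF N p n ξ x) ∧
    damF N p n ξ x ≤ damF N p n ξ x' := by
  have hup : x' = Function.update x i (x' i) := by
    ext j
    by_cases h : j = i
    · subst h; simp
    · simp [h, hoff j h]
  have hself : x = Function.update x i (x i) := (Function.update_eq_self i x).symm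
  have hdiff : damF N p n ξ (Function.update x i 1) - damF N p n ξ (Function.update x i (-1))
      = 2 * damPhi N p n ξ i x := by
    unfold damPhi; ring
  have hstill : x' i = x i → damF N p n ξ x' = damF N p n ξ x := by
    intro h
    rw [hup, h, ← hself]
  have hflip : x' i ≠ x i → damF N p n ξ x' - damF N p n ξ x = 2 * |damPhi N p n ξ i x| := by
    intro h
    have hφ : damPhi N p n ξ i x ≠ 0 := fun h0 => h (hstay h0)
    have hs := hbr hφ
    rcases lt_or_gt_of_ne hφ with hneg | hpos
    · rw [Real.sign_of_neg hneg] at hs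
      have hxi : x i = 1 := (hx i).resolve_right fun h1 => h (hs.trans h1.symm)
      rw [hs] at hup
      rw [hxi] at hself
      rw [abs_of_neg hneg, congrArg (damF N p n ξ) hup, congrArg (damF N p n ξ) hself]
      linarith
    · rw [Real.sign_of_pos hpos] at hs
      have hxi : x i = -1 := (hx i).resolve_left fun h1 => h (hs.trans h1.symm)
      rw [hs] at hup
      rw [hxi] at hself
      rw [abs_of_pos hpos, congrArg (damF N p n ξ) hup, congrArg (damF N p n ξ) hself]
      linarith
  refine ⟨hflip, hstill, ?_⟩
  by_cases h : x' i = x i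
  · exact (hstill h).ge
  · have := hflip h
    have := abs_nonneg (damPhi N p n ξ i x)
    linarith
end

section
/- Under the componentwise interference bound with Λ < γ^{n−1}, let x be a state with m^ν(x) ≥ γ and let x' be the result of the asynchronous update at any coordinate i (x'_i = sign(h_i(x)), other coordinates unchanged). Then x'_i = ξ_i^ν; moreover m^ν(x') = m^ν(x) + 2/N if x_i ≠ ξ_i^ν and m^ν(x') = m^ν(x) if x_i = ξ_i^ν. In particular the target overlap never decreases under asynchronous updates inside the basin. -/
/-!
At a state in the basin of `ν`, the field at `i` multiplied by the target bit `ξ ν i` is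
`n * (m ^ (n - 1) + ξ ν i * I)`, where `m ≥ γ` is the target overlap and `|I| ≤ Λ < γ ^ (n - 1)`
is the interference. The bracket is positive, so the field has the sign of `ξ ν i`
(`damUpdate_self_eq`). The overlap is affine in each coordinate (`damM_update`), so replacing
`x i` by `ξ ν i` changes it by `ξ ν i * (ξ ν i - x i) / N`, which is `2 / N` on a flip and `0`
otherwise.
-/

open Finset

/-- Overlap of a state with pattern `μ`. -/
noncomputable def damM (N p : ℕ) (ξ : Fin p → Fin N → ℝ) (μ : Fin p) (x : Fin N → ℝ) : ℝ :=
  (1 / (N : ℝ)) * ∑ i : Fin N, ξ μ i * x i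

/-- Local field at coordinate `i`. -/
noncomputable def damH (N p n : ℕ) (ξ : Fin p → Fin N → ℝ) (i : Fin N)
    (x : Fin N → ℝ) : ℝ :=
  (n : ℝ) * ∑ μ : Fin p, ξ μ i * (damM N p ξ μ x) ^ (n - 1)

/-- Asynchronous update at coordinate `i`. -/
noncomputable def damUpdate (N p n : ℕ) (ξ : Fin p → Fin N → ℝ) (i : Fin N)
    (x : Fin N → ℝ) : Fin N → ℝ :=
  Function.update x i (Real.sign (damH N p n ξ i x))

lemma damM_update (N p : ℕ) (ξ : Fin p → Fin N → ℝ) (ν : Fin p) (x : Fin N → ℝ)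
    (i : Fin N) (b : ℝ) :
    damM N p ξ ν (Function.update x i b) = damM N p ξ ν x + ξ ν i * (b - x i) / N := by
  have h : ∑ j, ξ ν j * Function.update x i b j = ∑ j, ξ ν j * x j + ξ ν i * (b - x i) := by
    rw [← Finset.add_sum_erase _ _ (Finset.mem_univ i),
      ← Finset.add_sum_erase _ (fun j => ξ ν j * x j) (Finset.mem_univ i),
      Finset.sum_congr rfl fun j hj => by
        rw [Function.update_of_ne (Finset.ne_of_mem_erase hj)]]
    simp only [Function.update_self]
    ring
  unfold damM
  rw [h]
  ring

/-- If the interference at `i` is bounded by `Λ < γ ^ (n - 1)` and the target overlap is at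
least `γ`, then the target term dominates the field and the update writes the target bit. -/
lemma damUpdate_self_eq (N p n : ℕ) (hn : 0 < n) (ξ : Fin p → Fin N → ℝ)
    (ν : Fin p) (γ Λ : ℝ) (hγ0 : 0 ≤ γ) (hΛ : Λ < γ ^ (n - 1)) (x : Fin N → ℝ)
    (hbasin : γ ≤ damM N p ξ ν x) (i : Fin N) (hξ : ξ ν i = 1 ∨ ξ ν i = -1)
    (hI : |∑ μ ∈ Finset.univ.erase ν, ξ μ i * (damM N p ξ μ x) ^ (n - 1)| ≤ Λ) :
    damUpdate N p n ξ i x i = ξ ν i := by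
  have hpow : γ ^ (n - 1) ≤ damM N p ξ ν x ^ (n - 1) := pow_le_pow_left₀ hγ0 hbasin _
  have hn' : (0 : ℝ) < n := by exact_mod_cast hn
  obtain ⟨h1, h2⟩ := abs_le.mp hI
  rw [damUpdate, Function.update_self, damH, ← Finset.add_sum_erase _ _ (Finset.mem_univ ν)]
  rcases hξ with h | h
  · rw [h]
    exact Real.sign_of_pos (mul_pos hn' (by linarith))
  · rw [h]
    exact Real.sign_of_neg (mul_neg_of_pos_of_neg hn' (by linarith))

/-- Inside the basin, every asynchronous update sets the updated coordinate to the target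
bit, and the target overlap increases by `2/N` on a flip and is unchanged otherwise. -/
theorem stmt8 (N p n : ℕ) (hN : 1 ≤ N) (hp : 1 ≤ p) (hn : 2 ≤ n)
    (ξ : Fin p → Fin N → ℝ) (hξ : ∀ μ i, ξ μ i = 1 ∨ ξ μ i = -1)
    (ν : Fin p) (γ Λ : ℝ) (hγ0 : 0 < γ) (hγ1 : γ ≤ 1) (hΛ0 : 0 ≤ Λ)
    (hΛ : Λ < γ ^ (n - 1))
    (hI : ∀ y : Fin N → ℝ, (∀ i, y i = 1 ∨ y i = -1) → γ ≤ damM N p ξ ν y →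
      ∀ i : Fin N, |∑ μ ∈ Finset.univ.erase ν, ξ μ i * (damM N p ξ μ y) ^ (n - 1)| ≤ Λ)
    (x : Fin N → ℝ) (hx : ∀ i, x i = 1 ∨ x i = -1) (hbasin : γ ≤ damM N p ξ ν x)
    (i : Fin N) :
    damUpdate N p n ξ i x i = ξ ν i ∧
    (x i ≠ ξ ν i →
      damM N p ξ ν (damUpdate N p n ξ i x) = damM N p ξ ν x + 2 / (N : ℝ)) ∧
    (x i = ξ ν i →
      damM N p ξ ν (damUpdate N p n ξ i x) = damM N p ξ ν x) ∧
    damM N p ξ ν x ≤ damM N p ξ ν (damUpdate N p n ξ i x) := by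
  have hset := damUpdate_self_eq N p n (by omega) ξ ν γ Λ hγ0.le hΛ x hbasin i (hξ ν i)
    (hI x hx hbasin i)
  have hM : damM N p ξ ν (damUpdate N p n ξ i x)
      = damM N p ξ ν x + ξ ν i * (ξ ν i - x i) / N := by
    rw [damUpdate, Function.update_self] at hset
    rw [damUpdate, hset, damM_update]
  have hflip : x i ≠ ξ ν i →
      damM N p ξ ν (damUpdate N p n ξ i x) = damM N p ξ ν x + 2 / (N : ℝ) := by
    intro hne
    rw [hM]
    rcases hξ ν i with h | h <;> rcases hx i with h' | h' <;> rw [h, h'] at hne ⊢ <;>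
      first
        | exact absurd rfl hne
        | norm_num
  have hkeep : x i = ξ ν i →
      damM N p ξ ν (damUpdate N p n ξ i x) = damM N p ξ ν x := by
    intro he
    rw [hM, he]
    simp
  refine ⟨hset, hflip, hkeep, ?_⟩
  by_cases he : x i = ξ ν i
  · exact (hkeep he).ge
  · rw [hflip he]
    exact le_add_of_nonneg_right (by positivity)
end

section
/- Under the componentwise interference bound with Λ < γ^{n−1}, one full asynchronous sweep retrieves the target pattern exactly: for every permutation σ of {1,…,N} and every initial state x with m^ν(x) ≥ γ, the final state obtained by sequentially applying the asynchronous update at coordinates σ(1), σ(2), …, σ(N) (each update applied to the current state) equals ξ^ν, i.e. the final overlap with the target pattern is 1. -/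
/-!
At a `±1` state whose overlap with `ξ ν` is at least `γ`, the signal term of `ξ ν i * h_i / n` is
`(m^ν) ^ (n - 1) ≥ γ ^ (n - 1)` (as `ξ ν i ^ 2 = 1`) while the interference is at most
`Λ < γ ^ (n - 1)` in absolute value. Hence the local field has the sign of `ξ ν i`, and the update
sets coordinate `i` to `ξ ν i` (`damUpdate_eq_update`). This can only increase the overlap with
`ξ ν` (`damM_le_damM_update`), so the basin is never left, and by induction a run over any list of
coordinates sets exactly the visited coordinates to their target values
(`foldl_damUpdate_apply`). A permutation visits every coordinate.
-/

open Finset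

/-- In the basin of `ξ ν` the signal dominates the interference, so an update aligns the
coordinate with the target pattern. -/
lemma damUpdate_eq_update {N p n : ℕ} (hn : 2 ≤ n)
    {ξ : Fin p → Fin N → ℝ} (hξ : ∀ μ i, ξ μ i = 1 ∨ ξ μ i = -1)
    {ν : Fin p} {γ Λ : ℝ} (hγ0 : 0 < γ) (hΛ : Λ < γ ^ (n - 1))
    {y : Fin N → ℝ} (hy : γ ≤ damM N p ξ ν y) {i : Fin N}
    (hI : |∑ μ ∈ Finset.univ.erase ν, ξ μ i * (damM N p ξ μ y) ^ (n - 1)| ≤ Λ) :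
    damUpdate N p n ξ i y = Function.update y i (ξ ν i) := by
  have hpow : γ ^ (n - 1) ≤ damM N p ξ ν y ^ (n - 1) := pow_le_pow_left₀ hγ0.le hy _
  have hn0 : (0 : ℝ) < n := by exact_mod_cast (by omega : 0 < n)
  obtain ⟨hlo, hhi⟩ := abs_le.mp hI
  unfold damUpdate damH
  congr 1
  rw [← Finset.add_sum_erase _ _ (Finset.mem_univ ν)]
  rcases hξ ν i with h | h
  · rw [h]
    exact Real.sign_of_pos (mul_pos hn0 (by linarith))
  · rw [h]
    exact Real.sign_of_neg (mul_neg_of_pos_of_neg hn0 (by linarith))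

lemma damM_le_damM_update {N p : ℕ} {ξ : Fin p → Fin N → ℝ}
    (hξ : ∀ μ i, ξ μ i = 1 ∨ ξ μ i = -1) (ν : Fin p)
    {y : Fin N → ℝ} (hy : ∀ i, y i = 1 ∨ y i = -1) (i : Fin N) :
    damM N p ξ ν y ≤ damM N p ξ ν (Function.update y i (ξ ν i)) := by
  unfold damM
  refine mul_le_mul_of_nonneg_left (Finset.sum_le_sum fun j _ => ?_) (by positivity)
  by_cases hj : j = i
  · subst hj
    rcases hξ ν j with h | h <;> rcases hy j with h' | h' <;> simp [h, h']
  · simp [hj]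

/-- Updating along any list of coordinates, started in the basin of `ξ ν`, sets the visited
coordinates to their target values and leaves the others unchanged. -/
lemma foldl_damUpdate_apply {N p n : ℕ} (hn : 2 ≤ n)
    {ξ : Fin p → Fin N → ℝ} (hξ : ∀ μ i, ξ μ i = 1 ∨ ξ μ i = -1)
    {ν : Fin p} {γ Λ : ℝ} (hγ0 : 0 < γ) (hΛ : Λ < γ ^ (n - 1))
    (hI : ∀ y : Fin N → ℝ, (∀ i, y i = 1 ∨ y i = -1) → γ ≤ damM N p ξ ν y →
      ∀ i : Fin N, |∑ μ ∈ Finset.univ.erase ν, ξ μ i * (damM N p ξ μ y) ^ (n - 1)| ≤ Λ)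
    (σ : Fin N → Fin N) (l : List (Fin N)) (y : Fin N → ℝ)
    (hy : ∀ i, y i = 1 ∨ y i = -1) (hm : γ ≤ damM N p ξ ν y) (j : Fin N) :
    l.foldl (fun y k => damUpdate N p n ξ (σ k) y) y j =
      if j ∈ l.map σ then ξ ν j else y j := by
  induction l generalizing y with
  | nil => simp
  | cons k l ih =>
    rw [List.foldl_cons, damUpdate_eq_update hn hξ hγ0 hΛ hm (hI y hy hm (σ k)),
      ih _ _ (hm.trans (damM_le_damM_update hξ ν hy _))]
    · by_cases hj : j = σ k
      · subst hj
        simp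
      · simp [hj]
    · intro i
      by_cases hi : i = σ k
      · subst hi
        simpa using hξ ν (σ k)
      · simpa [hi] using hy i

/-- One full asynchronous sweep (in any order given by a permutation `σ`) retrieves the
target pattern exactly: the final state equals `ξ^ν`. -/
theorem stmt9 (N p n : ℕ) (hN : 1 ≤ N) (hp : 1 ≤ p) (hn : 2 ≤ n)
    (ξ : Fin p → Fin N → ℝ) (hξ : ∀ μ i, ξ μ i = 1 ∨ ξ μ i = -1)
    (ν : Fin p) (γ Λ : ℝ) (hγ0 : 0 < γ) (hγ1 : γ ≤ 1) (hΛ0 : 0 ≤ Λ)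
    (hΛ : Λ < γ ^ (n - 1))
    (hI : ∀ y : Fin N → ℝ, (∀ i, y i = 1 ∨ y i = -1) → γ ≤ damM N p ξ ν y →
      ∀ i : Fin N, |∑ μ ∈ Finset.univ.erase ν, ξ μ i * (damM N p ξ μ y) ^ (n - 1)| ≤ Λ)
    (σ : Equiv.Perm (Fin N))
    (x : Fin N → ℝ) (hx : ∀ i, x i = 1 ∨ x i = -1) (hbasin : γ ≤ damM N p ξ ν x) :
    (List.finRange N).foldl (fun y k => damUpdate N p n ξ (σ k) y) x = ξ ν := by
  funext j
  rw [foldl_damUpdate_apply hn hξ hγ0 hΛ hI σ _ x hx hbasin j,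
    if_pos (List.mem_map.mpr ⟨σ.symm j, List.mem_finRange _, σ.apply_symm_apply j⟩)]
end

section
/- Under the componentwise interference bound with Λ < γ^{n−1}, a uniformly random single asynchronous update improves the target overlap in expectation with the exact rate (1 − m)/N: for every state x with m^ν(x) ≥ γ, writing U_i(x) for the state obtained by the asynchronous update at coordinate i, one has (1/N)·Σ_{i=1}^N m^ν(U_i(x)) = m^ν(x) + (1 − m^ν(x))/N. -/
/-!
In the basin `m ≥ γ` the interference is too small to change the sign of the local field, so every
single-site update sets coordinate `i` to `ξ ν i` (`sign_damH_eq`). Such an update changes the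
overlap by exactly `(1 - ξ ν i * x i) / N` (`damM_update_pattern`). Averaging over `i` gives
the increment `(1 - m) / N`, because the average of `ξ ν i * x i` is `m` itself.
-/

open Finset

/-- Inside the basin the signal term `m ^ (n - 1) ≥ γ ^ (n - 1) > Λ` dominates the interference,
so the local field has the sign of the target pattern. -/
theorem sign_damH_eq {N p n : ℕ} (hn : 2 ≤ n) {ξ : Fin p → Fin N → ℝ}
    (hξ : ∀ μ i, ξ μ i = 1 ∨ ξ μ i = -1) {ν : Fin p} {γ Λ : ℝ} (hγ0 : 0 < γ)
    (hΛ : Λ < γ ^ (n - 1)) {x : Fin N → ℝ} (hbasin : γ ≤ damM N p ξ ν x) (i : Fin N)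
    (hI : |∑ μ ∈ Finset.univ.erase ν, ξ μ i * (damM N p ξ μ x) ^ (n - 1)| ≤ Λ) :
    Real.sign (damH N p n ξ i x) = ξ ν i := by
  have hpow : γ ^ (n - 1) ≤ damM N p ξ ν x ^ (n - 1) := pow_le_pow_left₀ hγ0.le hbasin _
  have hn0 : (0 : ℝ) < n := by exact_mod_cast (by omega : 0 < n)
  have hI' := abs_le.mp hI
  unfold damH
  rw [← Finset.add_sum_erase Finset.univ _ (Finset.mem_univ ν)]
  rcases hξ ν i with h | h
  · rw [h]
    exact Real.sign_of_pos (mul_pos hn0 (by linarith))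
  · rw [h]
    exact Real.sign_of_neg (mul_neg_of_pos_of_neg hn0 (by linarith))

/-- Setting coordinate `i` to the pattern's value replaces the summand `ξ ν i * x i` of the
overlap by `ξ ν i * ξ ν i = 1`. -/
theorem damM_update_pattern {N p : ℕ} {ξ : Fin p → Fin N → ℝ}
    (hξ : ∀ μ i, ξ μ i = 1 ∨ ξ μ i = -1) (ν : Fin p) (x : Fin N → ℝ) (i : Fin N) :
    damM N p ξ ν (Function.update x i (ξ ν i))
      = damM N p ξ ν x + (1 / (N : ℝ)) * (1 - ξ ν i * x i) := by
  have hsq : ξ ν i * ξ ν i = 1 := by rcases hξ ν i with h | h <;> rw [h] <;> norm_num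
  have hrest : ∑ j ∈ Finset.univ.erase i, ξ ν j * Function.update x i (ξ ν i) j
      = ∑ j ∈ Finset.univ.erase i, ξ ν j * x j :=
    Finset.sum_congr rfl fun j hj => by
      rw [Function.update_of_ne (Finset.ne_of_mem_erase hj)]
  unfold damM
  rw [← Finset.add_sum_erase Finset.univ _ (Finset.mem_univ i),
    ← Finset.add_sum_erase Finset.univ (fun j => ξ ν j * x j) (Finset.mem_univ i), hrest,
    Function.update_self, hsq]
  ring

/-- A uniformly random asynchronous update improves the target overlap in expectation at
the exact rate `(1 − m)/N`. -/
theorem stmt10 (N p n : ℕ) (hN : 1 ≤ N) (hp : 1 ≤ p) (hn : 2 ≤ n)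
    (ξ : Fin p → Fin N → ℝ) (hξ : ∀ μ i, ξ μ i = 1 ∨ ξ μ i = -1)
    (ν : Fin p) (γ Λ : ℝ) (hγ0 : 0 < γ) (hγ1 : γ ≤ 1) (hΛ0 : 0 ≤ Λ)
    (hΛ : Λ < γ ^ (n - 1))
    (hI : ∀ y : Fin N → ℝ, (∀ i, y i = 1 ∨ y i = -1) → γ ≤ damM N p ξ ν y →
      ∀ i : Fin N, |∑ μ ∈ Finset.univ.erase ν, ξ μ i * (damM N p ξ μ y) ^ (n - 1)| ≤ Λ)
    (x : Fin N → ℝ) (hx : ∀ i, x i = 1 ∨ x i = -1) (hbasin : γ ≤ damM N p ξ ν x) :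
    (1 / (N : ℝ)) * ∑ i : Fin N, damM N p ξ ν (damUpdate N p n ξ i x)
      = damM N p ξ ν x + (1 - damM N p ξ ν x) / (N : ℝ) := by
  have hN0 : (N : ℝ) ≠ 0 := by exact_mod_cast (by omega : N ≠ 0)
  have hstep : ∀ i, damM N p ξ ν (damUpdate N p n ξ i x)
      = damM N p ξ ν x + (1 / (N : ℝ)) * (1 - ξ ν i * x i) := fun i => by
    unfold damUpdate
    rw [sign_damH_eq hn hξ hγ0 hΛ hbasin i (hI x hx hbasin i), damM_update_pattern hξ]
  have hsum : ∑ i, ξ ν i * x i = N * damM N p ξ ν x := by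
    unfold damM
    field_simp
  simp only [hstep]
  rw [Finset.sum_add_distrib, ← Finset.mul_sum, Finset.sum_sub_distrib, hsum]
  simp only [Finset.sum_const, Finset.card_univ, Fintype.card_fin, nsmul_eq_mul]
  field_simp
end
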